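/- Let D be an integer with 3 ≤ D ≤ 75, let q_1 < q_2 < ⋯ < q_L be pairwise coprime positive integers with q_1 > 1, and for 1 ≤ j ≤ D let σ_j be the cyclic permutation σ_j = (j, j+1, …, D, 1, 2, …, j−1) of {1,…,D}. Then the D×D matrix R_D = (q_1·q_2⋯q_L)^D · I is a least common right multiple of the D·L matrices M(q_i, σ_j), 1 ≤ i ≤ L, 1 ≤ j ≤ D: R_D is a common right multiple of all of them, and every nonsingular D×D integer matrix that is a common right multiple of all of them is a right multiple of R_D. -/

import Mathlib

/-- The `D × D` integer matrix `M(q, σ)`: diagonal entries all `q`, entry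
`(σ(k), σ(k+1))` equal to `1` for `k = 1, …, D-1`, all other entries `0`. -/
def Mmat {D : ℕ} (q : ℤ) (σ : Equiv.Perm (Fin D)) : Matrix (Fin D) (Fin D) ℤ :=
  Matrix.diagonal (fun _ => q) +
    ∑ k : Fin (D - 1),
      Matrix.single (σ ⟨(k : ℕ), by have := k.isLt; omega⟩)
        (σ ⟨(k : ℕ) + 1, by have := k.isLt; omega⟩) (1 : ℤ)

/-- Two square integer matrices are left coprime if every common left divisor of
them is unimodular. -/
def LeftCoprime {D : ℕ} (M N : Matrix (Fin D) (Fin D) ℤ) : Prop :=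
  ∀ A : Matrix (Fin D) (Fin D) ℤ, A.det ≠ 0 →
    (∃ B, M = A * B) → (∃ C, N = A * C) → (A.det = 1 ∨ A.det = -1)

/-- `A` is a right multiple of `M` if `A = M * P` for some nonsingular integer
matrix `P`. -/
def IsRightMultiple {D : ℕ} (A M : Matrix (Fin D) (Fin D) ℤ) : Prop :=
  ∃ P : Matrix (Fin D) (Fin D) ℤ, P.det ≠ 0 ∧ A = M * P

/-!
Let `F x = ∑ m < D, (-1) ^ m * q ^ (D - 1 - m) * x m`. The sum telescopes on sequences of the form
`q * w m + w (m + 1)`, with value `q ^ D * w 0 - (-1) ^ D * w D`. This identity is used twice.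

If `x` is a column of `M(q, σ) * P`, read in the order `σ`, then it has this form with `w` a column
of `P` and `w D = 0`, so `q ^ D ∣ F x`. For a common right multiple of the cyclic `M(q, σ_j)` we may
start reading a column at any index and continue cyclically, so `q ^ D` divides both `F x` and
`F (x (· + 1))`; the identity for `w = x` evaluates `q * F x + F (x (· + 1))`, and shows that
`q ^ D ∣ x D`. Hence `q ^ D` divides every entry, and coprimality combines the various `q`.
Conversely `det M(q, σ) = q ^ D`, so the adjugate shows that `q ^ D • 1` is a right multiple.
-/

open Finset
open scoped Matrix

section AltGeomSum

variable {A : Type*} [CommRing A]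

/-- The alternating geometric sum `x 0 * q ^ (n - 1) - x 1 * q ^ (n - 2) + ⋯ ± x (n - 1)` of a
sequence `x`; in terms of the shift operator `E` it is `(q ^ n - (-E) ^ n) / (q + E)` applied to
`x`, evaluated at `0`. -/
def altGeomSum (q : A) (n : ℕ) (x : ℕ → A) : A :=
  ∑ m ∈ range n, (-1) ^ m * q ^ (n - 1 - m) * x m

theorem altGeomSum_congr {q : A} {n : ℕ} {x y : ℕ → A} (h : ∀ m < n, x m = y m) :
    altGeomSum q n x = altGeomSum q n y :=
  sum_congr rfl fun m hm => by rw [h m (mem_range.mp hm)]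

theorem altGeomSum_mul_add_succ (q : A) (n : ℕ) (x : ℕ → A) :
    altGeomSum q n (fun m => q * x m + x (m + 1)) = q ^ n * x 0 - (-1) ^ n * x n := by
  have hterm : ∀ m ∈ range n, (-1) ^ m * q ^ (n - 1 - m) * (q * x m + x (m + 1)) =
      (-1) ^ m * q ^ (n - m) * x m - (-1) ^ (m + 1) * q ^ (n - (m + 1)) * x (m + 1) := by
    intro m hm
    have hexp : n - m = n - (m + 1) + 1 := by
      have := mem_range.mp hm
      omega
    rw [hexp, Nat.sub_sub, add_comm 1 m]
    ring
  rw [altGeomSum, sum_congr rfl hterm, sum_range_sub' fun m => (-1) ^ m * q ^ (n - m) * x m]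
  simp

theorem pow_dvd_of_pow_dvd_altGeomSum {q : A} {n : ℕ} {x : ℕ → A}
    (h₀ : q ^ n ∣ altGeomSum q n x) (h₁ : q ^ n ∣ altGeomSum q n fun m => x (m + 1)) :
    q ^ n ∣ x n := by
  have hlinear : q * altGeomSum q n x + altGeomSum q n (fun m => x (m + 1)) =
      q ^ n * x 0 - (-1) ^ n * x n := by
    rw [← altGeomSum_mul_add_succ]
    simp only [altGeomSum, mul_sum, ← sum_add_distrib]
    exact sum_congr rfl fun m _ => by ring
  have hdvd : q ^ n ∣ q ^ n * x 0 - (-1) ^ n * x n := hlinear ▸ (h₀.mul_left q).add h₁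
  have hunit : IsUnit ((-1 : A) ^ n) := isUnit_one.neg.pow n
  exact hunit.dvd_mul_left.mp ((dvd_sub_right (dvd_mul_right _ _)).mp hdvd)

end AltGeomSum

section Mmat

variable {D : ℕ} (q : ℤ) (σ : Equiv.Perm (Fin D))

theorem Mmat_apply (a b : Fin D) :
    Mmat q σ (σ a) (σ b) = (if a = b then q else 0) + if (a : ℕ) + 1 = b then 1 else 0 := by
  simp only [Mmat, Matrix.add_apply, Matrix.diagonal_apply, Matrix.sum_apply, Matrix.single_apply,
    σ.injective.eq_iff, Fin.ext_iff]
  congr 1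
  split_ifs with hab
  · rw [sum_eq_single ⟨a, by omega⟩] <;> grind
  · exact sum_eq_zero fun k _ => if_neg (by omega)

theorem det_Mmat : (Mmat q σ).det = q ^ D := by
  rw [← Matrix.det_submatrix_equiv_self σ, Matrix.det_of_isUpperTriangular]
  · simp [Mmat_apply]
  · intro a b (hba : b < a)
    rw [Matrix.submatrix_apply, Mmat_apply, if_neg hba.ne', if_neg (by omega), add_zero]

theorem Mmat_mulVec_apply (v : Fin D → ℤ) (k : Fin D) :
    (Mmat q σ *ᵥ v) (σ k) =
      q * v (σ k) + if h : (k : ℕ) + 1 < D then v (σ ⟨k + 1, h⟩) else 0 := by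
  rw [Matrix.mulVec, dotProduct, ← Equiv.sum_comp σ]
  simp only [Mmat_apply, add_mul, sum_add_distrib, ite_mul, zero_mul, one_mul, sum_ite_eq, mem_univ,
    if_true]
  congr 1
  split_ifs with h
  · rw [sum_eq_single ⟨k + 1, h⟩] <;> grind
  · exact sum_eq_zero fun b _ => if_neg (by omega)

variable {q σ}

theorem pow_dvd_altGeomSum_of_eq_Mmat_mulVec {v : Fin D → ℤ} {x : ℕ → ℤ}
    (hx : ∀ k : Fin D, x k = (Mmat q σ *ᵥ v) (σ k)) : q ^ D ∣ altGeomSum q D x := by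
  let w : ℕ → ℤ := fun m => if h : m < D then v (σ ⟨m, h⟩) else 0
  have hxw : ∀ m < D, x m = q * w m + w (m + 1) := fun m hm => by
    simpa [w, hm, Mmat_mulVec_apply] using hx ⟨m, hm⟩
  have hwD : w D = 0 := dif_neg (lt_irrefl D)
  rw [altGeomSum_congr hxw, altGeomSum_mul_add_succ, hwD, mul_zero, sub_zero]
  exact dvd_mul_right _ _

theorem IsRightMultiple.pow_dvd_altGeomSum {R : Matrix (Fin D) (Fin D) ℤ} {x : ℕ → ℤ} {c : Fin D}
    (hR : IsRightMultiple R (Mmat q σ)) (hx : ∀ k : Fin D, x k = R (σ k) c) :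
    q ^ D ∣ altGeomSum q D x := by
  obtain ⟨P, -, rfl⟩ := hR
  exact pow_dvd_altGeomSum_of_eq_Mmat_mulVec (v := P.col c) hx

theorem pow_dvd_apply_of_forall_isRightMultiple {σ : Fin D → Equiv.Perm (Fin D)}
    (hσ : ∀ j k, σ j k = j + k) {R : Matrix (Fin D) (Fin D) ℤ}
    (hR : ∀ j, IsRightMultiple R (Mmat q (σ j))) (a c : Fin D) : q ^ D ∣ R a c := by
  have : NeZero D := ⟨a.pos.ne'⟩
  let x : ℕ → ℤ := fun m => R (a + Fin.ofNat D m) c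
  have hx₀ : ∀ k : Fin D, x k = R (σ a k) c := fun k => by simp [x, hσ]
  have hx₁ : ∀ k : Fin D, x (k + 1) = R (σ (a + Fin.ofNat D 1) k) c := fun k => by
    have hsucc : Fin.ofNat D (k + 1) = Fin.ofNat D 1 + k := by
      ext
      simp [Fin.val_add, add_comm]
    simp only [x, hσ, hsucc, add_assoc]
  have hxD : x D = R a c := by simp [x]
  rw [← hxD]
  exact pow_dvd_of_pow_dvd_altGeomSum ((hR _).pow_dvd_altGeomSum hx₀)
    ((hR _).pow_dvd_altGeomSum hx₁)

end Mmat

namespace IsRightMultiple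

variable {D : ℕ}

theorem of_eq_mul {R M P : Matrix (Fin D) (Fin D) ℤ} (hR : R.det ≠ 0) (h : R = M * P) :
    IsRightMultiple R M :=
  ⟨P, right_ne_zero_of_mul (by rwa [← Matrix.det_mul, ← h]), h⟩

theorem smul_one_of_det_dvd {M : Matrix (Fin D) (Fin D) ℤ} {n : ℤ} (hn : n ≠ 0)
    (h : M.det ∣ n) : IsRightMultiple (n • (1 : Matrix (Fin D) (Fin D) ℤ)) M := by
  obtain ⟨t, rfl⟩ := h
  refine of_eq_mul (P := t • M.adjugate) ?_ ?_
  · rw [Matrix.det_smul, Matrix.det_one, mul_one]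
    exact pow_ne_zero _ hn
  · rw [Matrix.mul_smul, Matrix.mul_adjugate, smul_smul, mul_comm]

theorem of_forall_dvd_apply {R : Matrix (Fin D) (Fin D) ℤ} {n : ℤ} (hR : R.det ≠ 0)
    (h : ∀ a c, n ∣ R a c) : IsRightMultiple R (n • (1 : Matrix (Fin D) (Fin D) ℤ)) := by
  choose P hP using h
  refine of_eq_mul (P := Matrix.of P) hR ?_
  ext a c
  rw [Matrix.smul_mul, one_mul, Matrix.smul_apply, Matrix.of_apply, smul_eq_mul, hP]

end IsRightMultiple

theorem stmt_15_general {ι : Type*} [Fintype ι] {D : ℕ} {q : ι → ℤ} (hq : ∀ i, q i ≠ 0)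
    (hcop : Pairwise fun i i' => IsCoprime (q i) (q i'))
    {σ : Fin D → Equiv.Perm (Fin D)} (hσ : ∀ j k : Fin D, σ j k = j + k) :
    (∀ (i : ι) (j : Fin D),
      IsRightMultiple (((∏ i, q i) ^ D) • (1 : Matrix (Fin D) (Fin D) ℤ))
        (Mmat (q i) (σ j))) ∧
    ∀ R : Matrix (Fin D) (Fin D) ℤ, R.det ≠ 0 →
      (∀ (i : ι) (j : Fin D), IsRightMultiple R (Mmat (q i) (σ j))) →
      IsRightMultiple R (((∏ i, q i) ^ D) • (1 : Matrix (Fin D) (Fin D) ℤ)) := by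
  refine ⟨fun i j => ?_, fun R hR hcrm => ?_⟩
  · refine .smul_one_of_det_dvd (pow_ne_zero D (prod_ne_zero_iff.mpr fun i _ => hq i)) ?_
    rw [det_Mmat]
    exact pow_dvd_pow_of_dvd (dvd_prod_of_mem q (mem_univ i)) D
  · refine .of_forall_dvd_apply hR fun a c => ?_
    rw [← prod_pow]
    exact prod_dvd_of_coprime (fun i _ i' _ hne => (hcop hne).pow)
      fun i _ => pow_dvd_apply_of_forall_isRightMultiple hσ (hcrm i) a c

/-- for `3 ≤ D ≤ 75` and the cyclic permutations
`σ_j : k ↦ j + k` of `Fin D`, the matrix `R_D = (q_1⋯q_L)^D • I` is a least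
common right multiple of the `D·L` matrices `M(q_i, σ_j)`. -/
theorem stmt_15 (D L : ℕ) (hD3 : 3 ≤ D) (hD75 : D ≤ 75) (hL : 1 ≤ L)
    (q : Fin L → ℤ) (hmono : StrictMono q) (hpos : ∀ i, 0 < q i)
    (hq1 : 1 < q ⟨0, hL⟩)
    (hcop : ∀ i i' : Fin L, i ≠ i' → IsCoprime (q i) (q i'))
    (σ : Fin D → Equiv.Perm (Fin D)) (hσ : ∀ j k : Fin D, σ j k = j + k) :
    (∀ (i : Fin L) (j : Fin D),
      IsRightMultiple (((∏ i, q i) ^ D) • (1 : Matrix (Fin D) (Fin D) ℤ))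
        (Mmat (q i) (σ j))) ∧
    ∀ R : Matrix (Fin D) (Fin D) ℤ, R.det ≠ 0 →
      (∀ (i : Fin L) (j : Fin D), IsRightMultiple R (Mmat (q i) (σ j))) →
      IsRightMultiple R (((∏ i, q i) ^ D) • (1 : Matrix (Fin D) (Fin D) ℤ)) := by
  have hq : ∀ i, q i ≠ 0 := fun i => (hpos i).ne'
  exact stmt_15_general hq (fun i i' => hcop i i') hσ
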